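/- Let Θ be a partially ordered set in which every pair of elements has an upper bound and a lower bound in Θ, let Z be a set, and let f : Z × Θ → ℝ. Assume there exist z₁, z₂ ∈ Z such that f(z₁, ·) : Θ → ℝ and f(z₂, ·) : Θ → ℝ are linearly independent (no (c₁, c₂) ∈ ℝ² \ {(0,0)} makes c₁·f(z₁,θ) + c₂·f(z₂,θ) = 0 for all θ). Then f is linear combinations SSC-preserving if and only if there exist λ₁, λ₂ : Z → ℝ such that (1) f(z₁, ·) and f(z₂, ·) are strictly ratio ordered, and (2) for every z ∈ Z and θ ∈ Θ, f(z, θ) = λ₁(z)·f(z₁, θ) + λ₂(z)·f(z₂, θ). -/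

import Mathlib

/-!
Strict ratio dominance of `f₁` over `f₂` says that the plane vector `(f₁ x, f₂ x)` turns clockwise
as `x` increases: the determinant `ratioDet f₁ f₂ x y` is positive whenever `x < y`.

Cramer's rule for three plane vectors then makes `g y`, for `g` in the span of `f₁` and `f₂` and
`x < y < w`, a positive combination of `g x` and `g w`. So a drop of `sgn ∘ g` between `x` and `y`
persists at every upper bound of `y`, and so does a rise. If `sgn ∘ g` had both, then `g` would
vanish at a common upper bound `u` and have opposite signs at two points below `u`; but a `g`
vanishing at `u` is a multiple of `ratioDet f₁ f₂ u`, which has one sign below `u`.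

Conversely, suppose that every nonzero function in the span of the sections is strictly single
crossing. Such a function does not vanish at two ordered points, so the span is a plane and
`ratioDet f₁ f₂ x y ≠ 0` for `x < y`. Fixing one argument of `ratioDet` gives a function in the span
that vanishes at that argument, hence has one sign above it and one sign below it; moving first the
upper and then the lower argument compares any two ordered pairs through a common upper bound.
-/

/-- A function `f : Θ → ℝ` is single crossing if `θ ↦ sgn (f θ)` is monotone
(increasing or decreasing). -/
def SingleCrossing {Θ : Type*} [PartialOrder Θ] (f : Θ → ℝ) : Prop :=
  Monotone (fun θ => Real.sign (f θ)) ∨ Antitone (fun θ => Real.sign (f θ))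

/-- Strictly single crossing: single crossing and no two ordered zeros. -/
def StrictSingleCrossing {Θ : Type*} [PartialOrder Θ] (f : Θ → ℝ) : Prop :=
  SingleCrossing f ∧ ∀ θ' θ'' : Θ, θ' < θ'' → ¬(f θ' = 0 ∧ f θ'' = 0)

/-- A subset of a partially ordered set is an interval. -/
def IsIntervalSet {Θ : Type*} [PartialOrder Θ] (S : Set Θ) : Prop :=
  ∀ θl θm θh : Θ, θl ∈ S → θh ∈ S → θl < θm → θm < θh → θm ∈ S

/-- Single-crossing differences. -/
def SCD {A : Type*} {Θ : Type*} [PartialOrder Θ] (u : A → Θ → ℝ) : Prop :=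
  ∀ a a' : A, SingleCrossing (fun θ => u a θ - u a' θ)

/-- Strict single-crossing differences. -/
def SSCD {A : Type*} {Θ : Type*} [PartialOrder Θ] (u : A → Θ → ℝ) : Prop :=
  ∀ a a' : A, a ≠ a' → StrictSingleCrossing (fun θ => u a θ - u a' θ)

/-- The choice correspondence `C_u(S, θ)`. -/
def choiceCorr {A : Type*} {Θ : Type*} (u : A → Θ → ℝ) (S : Set A) (θ : Θ) : Set A :=
  {a ∈ S | ∀ b ∈ S, u b θ ≤ u a θ}

/-- `f₁` ratio dominates `f₂`: conditions (RD) and (RD+). -/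
def RatioDominates {Θ : Type*} [PartialOrder Θ] (f₁ f₂ : Θ → ℝ) : Prop :=
  (∀ θl θh : Θ, θl < θh → f₁ θl * f₂ θh ≤ f₁ θh * f₂ θl) ∧
  (∀ θl θm θh : Θ, θl < θm → θm < θh →
    (f₁ θl * f₂ θh = f₁ θh * f₂ θl ↔
      (f₁ θl * f₂ θm = f₁ θm * f₂ θl ∧ f₁ θm * f₂ θh = f₁ θh * f₂ θm)))

/-- `f₁` and `f₂` are ratio ordered. -/
def RatioOrdered {Θ : Type*} [PartialOrder Θ] (f₁ f₂ : Θ → ℝ) : Prop :=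
  RatioDominates f₁ f₂ ∨ RatioDominates f₂ f₁

/-- `f₁` strictly ratio dominates `f₂`. -/
def StrictRatioDominates {Θ : Type*} [PartialOrder Θ] (f₁ f₂ : Θ → ℝ) : Prop :=
  ∀ θl θh : Θ, θl < θh → f₁ θl * f₂ θh < f₁ θh * f₂ θl

/-- `f₁` and `f₂` are strictly ratio ordered. -/
def StrictRatioOrdered {Θ : Type*} [PartialOrder Θ] (f₁ f₂ : Θ → ℝ) : Prop :=
  StrictRatioDominates f₁ f₂ ∨ StrictRatioDominates f₂ f₁

/-- The environment `(A, Θ, u)` is convex. -/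
def ConvexEnv {A : Type*} {Θ : Type*} (u : A → Θ → ℝ) : Prop :=
  ∀ a a' : A, ∀ lam : ℝ, 0 < lam → lam < 1 →
    ∃ a'' : A, ∀ θ : Θ, u a'' θ = lam * u a θ + (1 - lam) * u a' θ

/-- `A` is minimal with respect to `u`: no utility-indistinguishable pair. -/
def MinimalActions {A : Type*} {Θ : Type*} (u : A → Θ → ℝ) : Prop :=
  ∀ a a' : A, a ≠ a' → ∃ θ : Θ, u a θ ≠ u a' θ

/-- `f : Z × Θ → ℝ` is linear combinations SC-preserving. -/
def LinCombSCPreserving {Z : Type*} {Θ : Type*} [PartialOrder Θ] (f : Z → Θ → ℝ) : Prop :=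
  ∀ μ : Z → ℝ, (Function.support μ).Finite →
    SingleCrossing (fun θ => ∑ᶠ z, μ z * f z θ)

/-- `f : Z × Θ → ℝ` is linear combinations SSC-preserving. -/
def LinCombSSCPreserving {Z : Type*} {Θ : Type*} [PartialOrder Θ] (f : Z → Θ → ℝ) : Prop :=
  ∀ μ : Z → ℝ, (Function.support μ).Finite →
    ((∀ θ : Θ, (∑ᶠ z, μ z * f z θ) = 0) ∨ StrictSingleCrossing (fun θ => ∑ᶠ z, μ z * f z θ))

/-- `f : Z × Θ → ℝ` is linear combinations monotonicity-preserving. -/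
def LinCombMonPreserving {Z : Type*} {Θ : Type*} [PartialOrder Θ] (f : Z → Θ → ℝ) : Prop :=
  ∀ μ : Z → ℝ, (Function.support μ).Finite →
    (Monotone (fun θ => ∑ᶠ z, μ z * f z θ) ∨ Antitone (fun θ => ∑ᶠ z, μ z * f z θ))

/-- A finite-support lottery on `X`. -/
def IsLottery {X : Type*} (P : X → ℝ) : Prop :=
  (∀ x, 0 ≤ P x) ∧ (Function.support P).Finite ∧ (∑ᶠ x, P x) = 1

/-- Single-crossing expectational differences. -/
def SCED {X : Type*} {Θ : Type*} [PartialOrder Θ] (v : X → Θ → ℝ) : Prop :=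
  ∀ P Q : X → ℝ, IsLottery P → IsLottery Q →
    SingleCrossing (fun θ => (∑ᶠ x, P x * v x θ) - ∑ᶠ x, Q x * v x θ)

section RatioDet

variable {Θ : Type*} {f₁ f₂ g : Θ → ℝ} {x y w : Θ}

/-- The determinant of the plane vectors `(f₁ y, f₂ y)` and `(f₁ x, f₂ x)`, in this order: its
positivity for `x < y` is the inequality that defines strict ratio dominance of `f₁` over `f₂`. -/
def ratioDet (f₁ f₂ : Θ → ℝ) (x y : Θ) : ℝ :=
  f₁ y * f₂ x - f₁ x * f₂ y

lemma ratioDet_self (f₁ f₂ : Θ → ℝ) (x : Θ) : ratioDet f₁ f₂ x x = 0 :=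
  sub_self _

lemma ratioDet_neg_swap (f₁ f₂ : Θ → ℝ) (x y : Θ) : -ratioDet f₁ f₂ y x = ratioDet f₁ f₂ x y :=
  neg_sub _ _

lemma ratioDet_eq_smul_add_smul (f₁ f₂ : Θ → ℝ) (x : Θ) :
    ratioDet f₁ f₂ x = f₂ x • f₁ + (-f₁ x) • f₂ := by
  ext y
  simp only [ratioDet, Pi.add_apply, Pi.smul_apply, smul_eq_mul]
  ring

lemma ratioDet_mem {V : Submodule ℝ (Θ → ℝ)} (h₁ : f₁ ∈ V) (h₂ : f₂ ∈ V) (x : Θ) :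
    ratioDet f₁ f₂ x ∈ V := by
  rw [ratioDet_eq_smul_add_smul]
  exact V.add_mem (V.smul_mem _ h₁) (V.smul_mem _ h₂)

lemma ratioDet_mul_apply_of_mem_span_pair (hg : g ∈ Submodule.span ℝ {f₁, f₂}) (x y w : Θ) :
    ratioDet f₁ f₂ x w * g y = ratioDet f₁ f₂ x y * g w + ratioDet f₁ f₂ y w * g x := by
  obtain ⟨a, b, rfl⟩ := Submodule.mem_span_pair.1 hg
  simp only [ratioDet, Pi.add_apply, Pi.smul_apply, smul_eq_mul]
  ring

lemma eq_zero_of_mem_span_pair_of_ratioDet_ne_zero (hg : g ∈ Submodule.span ℝ {f₁, f₂})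
    (hxy : ratioDet f₁ f₂ x y ≠ 0) (hx : g x = 0) (hy : g y = 0) : g = 0 := by
  ext w
  have h := ratioDet_mul_apply_of_mem_span_pair hg x y w
  rw [hx, hy, mul_zero, mul_zero, add_zero] at h
  exact (mul_eq_zero.1 h.symm).resolve_left hxy

variable [PartialOrder Θ]

lemma strictRatioDominates_iff_ratioDet_pos :
    StrictRatioDominates f₁ f₂ ↔ ∀ x y, x < y → 0 < ratioDet f₁ f₂ x y := by
  simp only [StrictRatioDominates, ratioDet, sub_pos]

lemma strictRatioDominates_swap_iff_ratioDet_neg :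
    StrictRatioDominates f₂ f₁ ↔ ∀ x y, x < y → ratioDet f₁ f₂ x y < 0 := by
  simp only [StrictRatioDominates, ratioDet, sub_neg, mul_comm]

end RatioDet

section Sign

variable {Θ : Type*} [PartialOrder Θ] {g : Θ → ℝ}

lemma realSign_lt_realSign_iff {s t : ℝ} :
    Real.sign s < Real.sign t ↔ s ≤ 0 ∧ 0 ≤ t ∧ s < t := by
  rcases lt_trichotomy s 0 with hs | rfl | hs <;> rcases lt_trichotomy t 0 with ht | rfl | ht <;>
    simp only [Real.sign_of_neg, Real.sign_of_pos, Real.sign_zero, *] <;> grind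

lemma SingleCrossing.nonneg_of_pos_of_eq_zero (hg : SingleCrossing g) {p x y : Θ} (hp : g p = 0)
    (hside : x ≤ p ∧ y ≤ p ∨ p ≤ x ∧ p ≤ y) (hx : 0 < g x) : 0 ≤ g y := by
  by_contra! hy
  have hpx : Real.sign (g p) < Real.sign (g x) := realSign_lt_realSign_iff.2 (by grind)
  have hyp : Real.sign (g y) < Real.sign (g p) := realSign_lt_realSign_iff.2 (by grind)
  rcases hg with hg | hg <;> rcases hside with ⟨hxp, hyp'⟩ | ⟨hpx', hpy⟩
  · exact (hg hxp).not_gt hpx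
  · exact (hg hpy).not_gt hyp
  · exact (hg hyp').not_gt hyp
  · exact (hg hpx').not_gt hpx

end Sign

section SSCSpace

variable {Θ : Type*} [PartialOrder Θ] {f₁ f₂ g : Θ → ℝ} {V : Submodule ℝ (Θ → ℝ)}

/-- A linear space of functions all of whose nonzero members are strictly single crossing. Linear
combinations SSC-preservation is this property of the span of the sections. -/
def IsSSCSpace (V : Submodule ℝ (Θ → ℝ)) : Prop :=
  ∀ g ∈ V, g = 0 ∨ StrictSingleCrossing g

lemma linCombSSCPreserving_iff_isSSCSpace_span_range {Z : Type*} {f : Z → Θ → ℝ} :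
    LinCombSSCPreserving f ↔ IsSSCSpace (Submodule.span ℝ (Set.range f)) := by
  have finsum_eq (c : Z →₀ ℝ) : (fun θ => ∑ᶠ z, c z * f z θ) = c.sum fun z r => r • f z := by
    ext θ
    rw [finsum_eq_sum_of_support_subset _ (s := c.support)]
    · simp [Finsupp.sum, Finset.sum_apply]
    · intro z hz
      simpa using left_ne_zero_of_mul hz
  constructor
  · intro hf g hg
    obtain ⟨c, rfl⟩ := Finsupp.mem_span_range_iff_exists_finsupp.1 hg
    rw [← finsum_eq]
    exact (hf c c.hasFiniteSupport).imp_left funext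
  · intro hV μ hμ
    have h := hV _ (Finsupp.mem_span_range_iff_exists_finsupp.2
      ⟨Finsupp.ofSupportFinite μ hμ, rfl⟩)
    rw [← finsum_eq] at h
    exact h.imp_left congrFun

lemma IsSSCSpace.eq_zero_of_lt (hV : IsSSCSpace V) (hg : g ∈ V) {x y : Θ} (hxy : x < y)
    (hx : g x = 0) (hy : g y = 0) : g = 0 :=
  (hV g hg).resolve_right fun h => h.2 x y hxy ⟨hx, hy⟩

lemma IsSSCSpace.singleCrossing (hV : IsSSCSpace V) (hg : g ∈ V) : SingleCrossing g := by
  rcases hV g hg with rfl | h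
  · exact .inl fun _ _ _ => le_rfl
  · exact h.1

lemma IsSSCSpace.ratioDet_ne_zero (hV : IsSSCSpace V) (h₁ : f₁ ∈ V) (h₂ : f₂ ∈ V)
    (hindep : LinearIndependent ℝ ![f₁, f₂]) {x y : Θ} (hxy : x < y) :
    ratioDet f₁ f₂ x y ≠ 0 := by
  intro hdet
  have apply_eq_zero {p : Θ} (hp : ratioDet f₁ f₂ p = 0) : f₁ p = 0 :=
    neg_eq_zero.1 (LinearIndependent.pair_iff.1 hindep _ _
      ((ratioDet_eq_smul_add_smul f₁ f₂ p).symm.trans hp)).2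
  have hx : f₁ x = 0 := apply_eq_zero <|
    hV.eq_zero_of_lt (ratioDet_mem h₁ h₂ x) hxy (ratioDet_self f₁ f₂ x) hdet
  have hy : f₁ y = 0 := apply_eq_zero <|
    hV.eq_zero_of_lt (ratioDet_mem h₁ h₂ y) hxy (by rw [← ratioDet_neg_swap, hdet, neg_zero])
      (ratioDet_self f₁ f₂ y)
  exact hindep.ne_zero 0 (hV.eq_zero_of_lt h₁ hxy hx hy)

lemma IsSSCSpace.le_span_pair (hV : IsSSCSpace V) (h₁ : f₁ ∈ V) (h₂ : f₂ ∈ V) {x y : Θ}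
    (hxy : x < y) (hdet : ratioDet f₁ f₂ x y ≠ 0) : V ≤ Submodule.span ℝ {f₁, f₂} := by
  intro g hg
  -- Cramer's rule: both sides agree at `x` and at `y`.
  have cramer : ratioDet f₁ f₂ x y • g = ratioDet g f₂ x y • f₁ + ratioDet f₁ g x y • f₂ := by
    refine sub_eq_zero.1 (hV.eq_zero_of_lt (V.sub_mem (V.smul_mem _ hg)
      (V.add_mem (V.smul_mem _ h₁) (V.smul_mem _ h₂))) hxy ?_ ?_) <;>
    · simp only [ratioDet, Pi.sub_apply, Pi.add_apply, Pi.smul_apply, smul_eq_mul]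
      ring
  rw [← Submodule.smul_mem_iff _ hdet, cramer]
  exact Submodule.mem_span_pair.2 ⟨_, _, rfl⟩

lemma IsSSCSpace.strictRatioOrdered [IsDirectedOrder Θ] (hV : IsSSCSpace V) (h₁ : f₁ ∈ V)
    (h₂ : f₂ ∈ V) (hindep : LinearIndependent ℝ ![f₁, f₂]) : StrictRatioOrdered f₁ f₂ := by
  have det_ne_zero {x y : Θ} (hxy : x < y) : ratioDet f₁ f₂ x y ≠ 0 :=
    hV.ratioDet_ne_zero h₁ h₂ hindep hxy
  have nonneg_of_pos {p x y : Θ} (hside : x ≤ p ∧ y ≤ p ∨ p ≤ x ∧ p ≤ y)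
      (hx : 0 < ratioDet f₁ f₂ p x) : 0 ≤ ratioDet f₁ f₂ p y :=
    (hV.singleCrossing (ratioDet_mem h₁ h₂ p)).nonneg_of_pos_of_eq_zero
      (ratioDet_self f₁ f₂ p) hside hx
  rw [StrictRatioOrdered, strictRatioDominates_iff_ratioDet_pos,
    strictRatioDominates_swap_iff_ratioDet_neg]
  by_contra! ⟨⟨a, b, hab, hab_nonpos⟩, c, d, hcd, hcd_nonneg⟩
  obtain ⟨u, hbu, hdu⟩ := exists_ge_ge b d
  have hau : a < u := hab.trans_le hbu
  have hcu : c < u := hcd.trans_le hdu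
  have hau_neg : ratioDet f₁ f₂ a u < 0 := by
    by_contra! h
    have := nonneg_of_pos (.inr ⟨hau.le, hab.le⟩) (h.lt_of_ne' (det_ne_zero hau))
    exact det_ne_zero hab (hab_nonpos.antisymm this)
  have hcu_nonneg : 0 ≤ ratioDet f₁ f₂ c u :=
    nonneg_of_pos (.inr ⟨hcd.le, hcu.le⟩) (hcd_nonneg.lt_of_ne' (det_ne_zero hcd))
  rw [← ratioDet_neg_swap] at hau_neg hcu_nonneg
  have hcu_zero : ratioDet f₁ f₂ u c = 0 :=
    le_antisymm (neg_nonneg.1 hcu_nonneg)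
      (nonneg_of_pos (.inl ⟨hau.le, hcu.le⟩) (neg_lt_zero.1 hau_neg))
  exact det_ne_zero hcu (by rw [← ratioDet_neg_swap, hcu_zero, neg_zero])

end SSCSpace

section StrictRatioDominates

variable {Θ : Type*} [PartialOrder Θ] {f₁ f₂ g : Θ → ℝ} {x y u : Θ}

lemma StrictRatioDominates.neg_of_realSign_lt (h : StrictRatioDominates f₁ f₂)
    (hg : g ∈ Submodule.span ℝ {f₁, f₂}) (hxy : x < y) (hyu : y < u)
    (hsign : Real.sign (g y) < Real.sign (g x)) : g u < 0 := by
  rw [strictRatioDominates_iff_ratioDet_pos] at h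
  obtain ⟨hy, hx, hlt⟩ := realSign_lt_realSign_iff.1 hsign
  have hdet_xu := h x u (hxy.trans hyu)
  have hdet_yu := h y u hyu
  have hcomb := ratioDet_mul_apply_of_mem_span_pair hg x y u
  have hprod : ratioDet f₁ f₂ x y * g u < 0 := by
    rcases hx.eq_or_lt with hx | hx
    · rw [← hx] at hlt
      nlinarith
    · nlinarith
  exact neg_of_mul_neg_right hprod (h x y hxy).le

lemma StrictRatioDominates.realSign_lt_of_le (h : StrictRatioDominates f₁ f₂)
    (hg : g ∈ Submodule.span ℝ {f₁, f₂}) (hxy : x < y) (hyu : y ≤ u)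
    (hsign : Real.sign (g y) < Real.sign (g x)) : Real.sign (g u) < Real.sign (g x) := by
  rcases hyu.eq_or_lt with rfl | hyu
  · exact hsign
  · have hu : g u < 0 := h.neg_of_realSign_lt hg hxy hyu hsign
    have hx : 0 ≤ g x := (realSign_lt_realSign_iff.1 hsign).2.1
    exact realSign_lt_realSign_iff.2 ⟨hu.le, hx, hu.trans_le hx⟩

lemma StrictRatioDominates.not_realSign_lt_of_realSign_lt (h : StrictRatioDominates f₁ f₂)
    (hg : g ∈ Submodule.span ℝ {f₁, f₂}) (hxu : x < u) (hyu : y < u)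
    (hx : Real.sign (g u) < Real.sign (g x)) : ¬Real.sign (g y) < Real.sign (g u) := by
  intro hy
  rw [strictRatioDominates_iff_ratioDet_pos] at h
  obtain ⟨hu_nonpos, -, hux⟩ := realSign_lt_realSign_iff.1 hx
  obtain ⟨-, hu_nonneg, hyu'⟩ := realSign_lt_realSign_iff.1 hy
  have hu : g u = 0 := hu_nonpos.antisymm hu_nonneg
  rw [hu] at hux hyu'
  have hcomb := ratioDet_mul_apply_of_mem_span_pair hg x u y
  rw [hu, mul_zero, ← ratioDet_neg_swap f₁ f₂ u y] at hcomb
  linarith [mul_neg_of_pos_of_neg (h x u hxu) hyu', mul_pos (h y u hyu) hux]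

lemma StrictRatioDominates.singleCrossing_of_mem_span_pair [IsDirectedOrder Θ]
    (h : StrictRatioDominates f₁ f₂) (hg : g ∈ Submodule.span ℝ {f₁, f₂}) :
    SingleCrossing g := by
  by_contra hcon
  simp only [SingleCrossing, Monotone, Antitone, not_or, not_forall, not_le] at hcon
  obtain ⟨⟨a, b, hab, hdrop⟩, c, d, hcd, hrise⟩ := hcon
  have hab : a < b := hab.lt_of_ne (by rintro rfl; exact hdrop.false)
  have hcd : c < d := hcd.lt_of_ne (by rintro rfl; exact hrise.false)
  obtain ⟨u, hbu, hdu⟩ := exists_ge_ge b d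
  have hau : Real.sign (g u) < Real.sign (g a) := h.realSign_lt_of_le hg hab hbu hdrop
  have hcu : Real.sign (g c) < Real.sign (g u) := by
    simpa [Real.sign_neg] using
      h.realSign_lt_of_le (neg_mem hg) hcd hdu (by simpa [Real.sign_neg] using hrise)
  exact h.not_realSign_lt_of_realSign_lt hg (hab.trans_le hbu) (hcd.trans_le hdu) hau hcu

lemma StrictRatioDominates.isSSCSpace_span_pair [IsDirectedOrder Θ]
    (h : StrictRatioDominates f₁ f₂) : IsSSCSpace (Submodule.span ℝ {f₁, f₂}) := by
  refine fun g hg => or_iff_not_imp_left.2 fun hne =>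
    ⟨h.singleCrossing_of_mem_span_pair hg, fun x y hxy ⟨hx, hy⟩ => hne ?_⟩
  have hdet := strictRatioDominates_iff_ratioDet_pos.1 h x y hxy
  exact eq_zero_of_mem_span_pair_of_ratioDet_ne_zero hg hdet.ne' hx hy

lemma StrictRatioOrdered.isSSCSpace_span_pair [IsDirectedOrder Θ]
    (h : StrictRatioOrdered f₁ f₂) : IsSSCSpace (Submodule.span ℝ {f₁, f₂}) := by
  rcases h with h | h
  · exact h.isSSCSpace_span_pair
  · rw [Set.pair_comm]
    exact h.isSSCSpace_span_pair

end StrictRatioDominates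

lemma nontrivial_of_linearIndependent_pair {Θ : Type*} {f₁ f₂ : Θ → ℝ}
    (hindep : LinearIndependent ℝ ![f₁, f₂]) : Nontrivial Θ := by
  by_contra hΘ
  rw [not_nontrivial_iff_subsingleton] at hΘ
  have := Fintype.ofFinite Θ
  have two_le_card : 2 ≤ Fintype.card Θ := by
    simpa only [Fintype.card_fin, Module.finrank_fintype_fun_eq_card] using
      hindep.fintype_card_le_finrank
  exact two_le_card.not_gt (Nat.lt_succ_of_le (Fintype.card_le_one_iff_subsingleton.2 hΘ))

theorem linCombSSCPreserving_iff_general {Θ Z : Type*} [PartialOrder Θ] [IsDirectedOrder Θ]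
    (f : Z → Θ → ℝ) (z₁ z₂ : Z) (hindep : LinearIndependent ℝ ![f z₁, f z₂]) :
    LinCombSSCPreserving f ↔
      ∃ lam₁ lam₂ : Z → ℝ,
        StrictRatioOrdered (f z₁) (f z₂) ∧
        (∀ (z : Z) (θ : Θ), f z θ = lam₁ z * f z₁ θ + lam₂ z * f z₂ θ) := by
  have hmem (z : Z) : f z ∈ Submodule.span ℝ (Set.range f) := Submodule.subset_span ⟨z, rfl⟩
  rw [linCombSSCPreserving_iff_isSSCSpace_span_range]
  constructor
  · intro hV
    have := nontrivial_of_linearIndependent_pair hindep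
    obtain ⟨x, y, hxy⟩ := exists_lt_of_directed_le Θ
    have hdet := hV.ratioDet_ne_zero (hmem z₁) (hmem z₂) hindep hxy
    have hspan (z : Z) := hV.le_span_pair (hmem z₁) (hmem z₂) hxy hdet (hmem z)
    choose lam₁ lam₂ hlam using fun z => Submodule.mem_span_pair.1 (hspan z)
    exact ⟨lam₁, lam₂, hV.strictRatioOrdered (hmem z₁) (hmem z₂) hindep,
      fun z θ => (congrFun (hlam z) θ).symm⟩
  · rintro ⟨lam₁, lam₂, hord, hlam⟩
    have hle : Submodule.span ℝ (Set.range f) ≤ Submodule.span ℝ {f z₁, f z₂} := by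
      rw [Submodule.span_le]
      rintro _ ⟨z, rfl⟩
      exact Submodule.mem_span_pair.2 ⟨lam₁ z, lam₂ z, funext fun θ => (hlam z θ).symm⟩
    exact fun g hg => hord.isSSCSpace_span_pair g (hle hg)

/-- Given two linearly independent sections, `f` is linear
combinations SSC-preserving iff these sections are strictly ratio ordered and
linearly generate all sections. -/
theorem linCombSSCPreserving_iff {Θ Z : Type*} [PartialOrder Θ]
    (hub : ∀ θ₁ θ₂ : Θ, ∃ θ : Θ, θ₁ ≤ θ ∧ θ₂ ≤ θ)
    (hlb : ∀ θ₁ θ₂ : Θ, ∃ θ : Θ, θ ≤ θ₁ ∧ θ ≤ θ₂)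
    (f : Z → Θ → ℝ) (z₁ z₂ : Z)
    (hindep : ∀ c₁ c₂ : ℝ, (∀ θ : Θ, c₁ * f z₁ θ + c₂ * f z₂ θ = 0) →
      c₁ = 0 ∧ c₂ = 0) :
    LinCombSSCPreserving f ↔
      ∃ lam₁ lam₂ : Z → ℝ,
        StrictRatioOrdered (f z₁) (f z₂) ∧
        (∀ (z : Z) (θ : Θ), f z θ = lam₁ z * f z₁ θ + lam₂ z * f z₂ θ) := by
  have : IsDirectedOrder Θ := ⟨hub⟩
  exact linCombSSCPreserving_iff_general f z₁ z₂ <| LinearIndependent.pair_iff.2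
    fun c₁ c₂ h => hindep c₁ c₂ (congrFun h)
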